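/- For every even integer n ≥ 10, the DFA 𝒜_n is completely reachable: every nonempty subset of ℤ_n is the image of ℤ_n under the action of some word over {a,b}. -/

import Mathlib

/-!
Reachability of subsets is shown by downward induction on the size. Write `h = n / 2`, so that
`h + h = 0` in `ZMod n`. The map `δ_a` has image `ZMod n \ {0}`, and the state `h` has the two
preimages `-2` and `-1`. Therefore a set `R` with `0 ∉ R` and `h ∈ R` is the image under `δ_a` of
its strictly larger preimage. After a rotation, every `S` which has some `t ∉ S` with `t + h ∈ S`
is the image of a strictly larger set (`reach_of_gap`).

Otherwise `S` is invariant under translation by `h`. As `S` is nonempty and proper, some `t ∉ S`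
has `t - 1 ∈ S`; rotate `t` to `0`, which gives `R` with `0, h ∉ R` and `-1, h - 1 ∈ R`. Its
preimage `T` under `δ_a` satisfies `δ_a(T) = R`, omits `-1` because `δ_a(-1) = h`, and contains
`h - 1` because `δ_a` fixes `h - 1`. So `T`, which is at least as large as `S`, is of the first
kind, with `t = -1`.
-/

/-- The two-letter alphabet of a binary DFA. -/
inductive Letter where
  | a : Letter
  | b : Letter

/-- Left-to-right action of a word on `ZMod n`, where the letter `b` acts as `q ↦ q + 1`
(a cyclic permutation) and the letter `a` acts as the given map `δa`. -/
def act {n : ℕ} (δa : ZMod n → ZMod n) : List Letter → ZMod n → ZMod n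
  | [], q => q
  | Letter.a :: w, q => act δa w (δa q)
  | Letter.b :: w, q => act δa w (q + 1)

/-- A binary circular DFA is completely reachable if every nonempty subset of states
is the image of the full state set under the action of some word. -/
def CompletelyReachable {n : ℕ} (δa : ZMod n → ZMod n) : Prop :=
  ∀ S : Set (ZMod n), S.Nonempty → ∃ w : List Letter, act δa w '' Set.univ = S

/-- A binary circular DFA is standardized if `0` has no `δa`-preimage and `δa 0` is the
unique state with more than one `δa`-preimage. -/
def Standardized {n : ℕ} (δa : ZMod n → ZMod n) : Prop :=
  (∀ q : ZMod n, δa q ≠ 0) ∧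
  ∀ p : ZMod n, 1 < {q : ZMod n | δa q = p}.ncard ↔ p = δa 0

/-- The orbit `O(𝒜) = {δa^i(0) : i ≥ 1}`. -/
def orbitSet {n : ℕ} (δa : ZMod n → ZMod n) : Set (ZMod n) :=
  {q : ZMod n | ∃ i : ℕ, 1 ≤ i ∧ δa^[i] 0 = q}

/-- The orbit subgroup `K(𝒜)`: the subgroup of `(ZMod n, +)` generated by the orbit. -/
def orbitSubgroup {n : ℕ} (δa : ZMod n → ZMod n) : AddSubgroup (ZMod n) :=
  AddSubgroup.closure (orbitSet δa)

/-- The action of the letter `a` in the DFA `𝒜_n` (for even `n ≥ 10`):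
`0 ↦ n−3 ↦ 1 ↦ n−2 ↦ n/2 ↦ n−4 ↦ n−1 ↦ n/2`, all other states are fixed. -/
def deltaA (n : ℕ) : ZMod n → ZMod n := fun q =>
  if q = 0 then ((n - 3 : ℕ) : ZMod n)
  else if q = ((n - 3 : ℕ) : ZMod n) then 1
  else if q = 1 then ((n - 2 : ℕ) : ZMod n)
  else if q = ((n - 2 : ℕ) : ZMod n) then ((n / 2 : ℕ) : ZMod n)
  else if q = ((n / 2 : ℕ) : ZMod n) then ((n - 4 : ℕ) : ZMod n)
  else if q = ((n - 4 : ℕ) : ZMod n) then ((n - 1 : ℕ) : ZMod n)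
  else if q = ((n - 1 : ℕ) : ZMod n) then ((n / 2 : ℕ) : ZMod n)
  else q

/-- The set `S` is the image of the full state set under some word. -/
def Reach (n : ℕ) (S : Set (ZMod n)) : Prop :=
  ∃ w : List Letter, act (deltaA n) w '' Set.univ = S

lemma act_append {n : ℕ} (d : ZMod n → ZMod n) (u v : List Letter) (q : ZMod n) :
    act d (u ++ v) q = act d v (act d u q) := by
  induction u generalizing q with
  | nil => rfl
  | cons x u ih => cases x <;> exact ih _

lemma Reach.image_act {n : ℕ} {S : Set (ZMod n)} (hS : Reach n S) (v : List Letter) :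
    Reach n (act (deltaA n) v '' S) := by
  obtain ⟨w, rfl⟩ := hS
  refine ⟨w ++ v, ?_⟩
  rw [Set.image_image]
  simp only [act_append]

lemma Reach.image_a {n : ℕ} {S : Set (ZMod n)} (hS : Reach n S) : Reach n (deltaA n '' S) :=
  hS.image_act [Letter.a]

lemma act_replicate_b {n : ℕ} (d : ZMod n → ZMod n) (k : ℕ) (q : ZMod n) :
    act d (List.replicate k Letter.b) q = q + k := by
  induction k generalizing q with
  | zero => simp [act]
  | succ k ih => simp [List.replicate_succ, act, ih]; ring

lemma Reach.of_rotate {n : ℕ} [NeZero n] {S : Set (ZMod n)} (t : ZMod n)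
    (hS : Reach n {x | x + t ∈ S}) : Reach n S := by
  convert hS.image_act (List.replicate t.val Letter.b) using 1
  ext x
  simp only [Set.mem_image, Set.mem_ofPred_eq, act_replicate_b, ZMod.natCast_val, ZMod.cast_id]
  exact ⟨fun hx => ⟨x - t, by simpa using hx, by simp⟩, by rintro ⟨y, hy, rfl⟩; exact hy⟩

lemma cast_eq_iff {n i j : ℕ} (hi : i < n) (hj : j < n) :
    ((i : ℕ) : ZMod n) = ((j : ℕ) : ZMod n) ↔ i = j := by
  rw [ZMod.natCast_eq_natCast_iff', Nat.mod_eq_of_lt hi, Nat.mod_eq_of_lt hj]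

/-- The map `δ_a` computed on the representatives `0, …, n - 1`. -/
lemma deltaA_cast {n : ℕ} (hn : 10 ≤ n) {k : ℕ} (hk : k < n) :
    deltaA n (k : ZMod n) =
      ((if k = 0 then n - 3 else if k = n - 3 then 1 else if k = 1 then n - 2
        else if k = n - 2 then n / 2 else if k = n / 2 then n - 4
        else if k = n - 4 then n - 1 else if k = n - 1 then n / 2 else k : ℕ) : ZMod n) := by
  have h0 : (k : ZMod n) = 0 ↔ k = 0 := by
    simpa using cast_eq_iff hk (show 0 < n by omega)
  have h1 : (k : ZMod n) = 1 ↔ k = 1 := by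
    simpa using cast_eq_iff hk (show 1 < n by omega)
  unfold deltaA
  simp only [h0, h1, cast_eq_iff hk (show n - 3 < n by omega), cast_eq_iff hk (show n - 2 < n by omega),
    cast_eq_iff hk (show n / 2 < n by omega), cast_eq_iff hk (show n - 4 < n by omega),
    cast_eq_iff hk (show n - 1 < n by omega)]
  split_ifs <;> simp

lemma deltaA_last {n : ℕ} (hn : 10 ≤ n) : deltaA n ((n - 1 : ℕ) : ZMod n) = (n / 2 : ℕ) := by
  rw [deltaA_cast hn (by omega)]
  congr 1
  split_ifs <;> omega

lemma deltaA_half_pred {n : ℕ} (hn : 10 ≤ n) :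
    deltaA n ((n / 2 - 1 : ℕ) : ZMod n) = (n / 2 - 1 : ℕ) := by
  rw [deltaA_cast hn (by omega)]
  congr 1
  split_ifs <;> omega

/-- Every nonzero state has a preimage under `δ_a` other than `-1`. -/
lemma exists_preimage {n : ℕ} (hn : 10 ≤ n) (x : ZMod n) (hx : x ≠ 0) :
    ∃ y, y ≠ ((n - 1 : ℕ) : ZMod n) ∧ deltaA n y = x := by
  have : NeZero n := ⟨by omega⟩
  obtain ⟨k, hk, rfl⟩ : ∃ k : ℕ, k < n ∧ (k : ZMod n) = x := ⟨x.val, x.val_lt, by simp⟩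
  have hk0 : k ≠ 0 := by rintro rfl; simp at hx
  obtain ⟨j, hj, hj1, hjk⟩ : ∃ j : ℕ, j < n ∧ j ≠ n - 1 ∧
      (if j = 0 then n - 3 else if j = n - 3 then 1 else if j = 1 then n - 2
        else if j = n - 2 then n / 2 else if j = n / 2 then n - 4
        else if j = n - 4 then n - 1 else if j = n - 1 then n / 2 else j) = k := by
    obtain h | h | h | h | h | h | h : k = n - 3 ∨ k = 1 ∨ k = n - 2 ∨ k = n / 2 ∨ k = n - 4 ∨
        k = n - 1 ∨
        (k ≠ n - 3 ∧ k ≠ 1 ∧ k ≠ n - 2 ∧ k ≠ n / 2 ∧ k ≠ n - 4 ∧ k ≠ n - 1) := by omega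
    · exact ⟨0, by omega, by omega, by simp [h]⟩
    · exact ⟨n - 3, by omega, by omega, by split_ifs <;> omega⟩
    · exact ⟨1, by omega, by omega, by
        rw [if_neg (by omega), if_neg (by omega), if_pos rfl, h]⟩
    · exact ⟨n - 2, by omega, by omega, by split_ifs <;> omega⟩
    · exact ⟨n / 2, by omega, by omega, by split_ifs <;> omega⟩
    · exact ⟨n - 4, by omega, by omega, by split_ifs <;> omega⟩
    · exact ⟨k, by omega, by omega, by split_ifs <;> omega⟩
  refine ⟨j, ?_, by rw [deltaA_cast hn hj, hjk]⟩
  rwa [Ne, cast_eq_iff hj (by omega)]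

lemma image_preimage_diff {n : ℕ} (hn : 10 ≤ n) {R : Set (ZMod n)} (h0 : (0 : ZMod n) ∉ R) :
    deltaA n '' ((deltaA n ⁻¹' R) \ {((n - 1 : ℕ) : ZMod n)}) = R := by
  ext x
  constructor
  · rintro ⟨y, ⟨hy, -⟩, rfl⟩
    exact hy
  · intro hx
    obtain ⟨y, hy, rfl⟩ := exists_preimage hn x (fun h => h0 (h ▸ hx))
    exact ⟨y, ⟨hx, hy⟩, rfl⟩

lemma image_preimage {n : ℕ} (hn : 10 ≤ n) {R : Set (ZMod n)} (h0 : (0 : ZMod n) ∉ R) :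
    deltaA n '' (deltaA n ⁻¹' R) = R :=
  (Set.image_preimage_subset _ _).antisymm <|
    (image_preimage_diff hn h0).symm.subset.trans (Set.image_mono Set.sdiff_subset)

lemma ncard_rotate {n : ℕ} (S : Set (ZMod n)) (t : ZMod n) :
    {x | x + t ∈ S}.ncard = S.ncard :=
  Set.ncard_preimage_of_injective_subset_range (add_left_injective t)
    (fun x _ => ⟨x - t, by simp⟩)

/-- A set that omits `t` but contains `t + n / 2` is reachable as soon as all strictly larger
sets are. -/
lemma reach_of_gap {n : ℕ} (hn : 10 ≤ n) {S : Set (ZMod n)}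
    (ih : ∀ T : Set (ZMod n), S.ncard < T.ncard → Reach n T)
    {t : ZMod n} (ht : t ∉ S) (hth : t + (n / 2 : ℕ) ∈ S) : Reach n S := by
  have : NeZero n := ⟨by omega⟩
  refine Reach.of_rotate t ?_
  have h0 : (0 : ZMod n) ∉ {x | x + t ∈ S} := by simpa using ht
  have hm : ((n - 1 : ℕ) : ZMod n) ∈ deltaA n ⁻¹' {x | x + t ∈ S} := by
    rw [Set.mem_preimage, deltaA_last hn]
    simpa [add_comm] using hth
  rw [← image_preimage hn h0]
  refine (ih _ ?_).image_a
  rw [← ncard_rotate S t, ← Set.ncard_sdiff_singleton_add_one hm]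
  conv_lhs => rw [← image_preimage_diff hn h0]
  exact Nat.lt_succ_of_le (Set.ncard_image_le (Set.toFinite _))

/-- A nonempty set of residues closed under predecessors is everything. -/
lemma eq_univ_of_pred {n : ℕ} [NeZero n] {S : Set (ZMod n)} (hS : S.Nonempty)
    (h : ∀ t, t ∈ S → t - 1 ∈ S) : S = Set.univ := by
  obtain ⟨s, hs⟩ := hS
  have key : ∀ k : ℕ, s - k ∈ S := by
    intro k
    induction k with
    | zero => simpa using hs
    | succ k ih => simpa [sub_sub] using h _ ih
  refine Set.eq_univ_of_forall fun x => ?_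
  simpa using key (s - x).val

lemma reach_of_larger {n : ℕ} (hn : 10 ≤ n) (hev : Even n) {S : Set (ZMod n)} (hS : S.Nonempty)
    (ih : ∀ T : Set (ZMod n), S.ncard < T.ncard → Reach n T) : Reach n S := by
  have : NeZero n := ⟨by omega⟩
  by_cases hu : S = Set.univ
  · exact ⟨[], by simp [act, hu]⟩
  by_cases hgap : ∃ t, t ∉ S ∧ t + (n / 2 : ℕ) ∈ S
  · obtain ⟨t, h1, h2⟩ := hgap
    exact reach_of_gap hn ih h1 h2
  push Not at hgap
  have hhalf : ((n / 2 : ℕ) : ZMod n) + (n / 2 : ℕ) = 0 := by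
    rw [← Nat.cast_add, ← two_mul, Nat.two_mul_div_two_of_even hev, ZMod.natCast_self]
  have hlast : ((n - 1 : ℕ) : ZMod n) = -1 := by
    rw [Nat.cast_sub (by omega)]; simp
  have hpred : ((n / 2 - 1 : ℕ) : ZMod n) = -1 + (n / 2 : ℕ) := by
    rw [Nat.cast_sub (by omega)]; push_cast; ring
  have hinv : ∀ t, t ∈ S → t + (n / 2 : ℕ) ∈ S := fun t ht => by
    by_contra hc
    exact hgap _ hc (by rwa [add_assoc, hhalf, add_zero])
  obtain ⟨t, ht, htp⟩ : ∃ t, t ∉ S ∧ t - 1 ∈ S := by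
    by_contra! hc
    -- The complement would be nonempty and closed under predecessors, so `S` would be empty.
    have := eq_univ_of_pred (S := Sᶜ) (Set.nonempty_compl.2 hu) hc
    exact hS.ne_empty (Set.compl_univ_iff.1 this)
  refine Reach.of_rotate t ?_
  have h0 : (0 : ZMod n) ∉ {x | x + t ∈ S} := by simpa using ht
  have hcard : S.ncard ≤ (deltaA n ⁻¹' {x | x + t ∈ S}).ncard := by
    rw [← ncard_rotate S t]
    conv_lhs => rw [← image_preimage hn h0]
    exact Set.ncard_image_le (Set.toFinite _)
  rw [← image_preimage hn h0]
  refine Reach.image_a (reach_of_gap hn (fun T hT => ih T (hcard.trans_lt hT))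
    (t := ((n - 1 : ℕ) : ZMod n)) ?_ ?_)
  · rw [Set.mem_preimage, deltaA_last hn]
    intro hc
    exact hgap t ht (by rwa [add_comm])
  · rw [hlast, ← hpred, Set.mem_preimage, deltaA_half_pred hn, hpred]
    have := hinv _ htp
    rw [Set.mem_ofPred_eq]
    convert this using 1
    ring

/-- For every even integer `n ≥ 10`, the DFA `𝒜_n` is completely
reachable. -/
theorem stmt13 (n : ℕ) (hn : 10 ≤ n) (hev : Even n) :
    CompletelyReachable (deltaA n) := by
  suffices H : ∀ m : ℕ, ∀ S : Set (ZMod n), S.Nonempty → n ≤ m + S.ncard → Reach n S from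
    fun S hS => H n S hS (by omega)
  have : NeZero n := ⟨by omega⟩
  intro m
  induction m with
  | zero =>
    intro S hS hm
    refine reach_of_larger hn hev hS fun T hT => ?_
    -- No set has more than `n` elements.
    have := Set.ncard_le_card T
    rw [Nat.card_zmod] at this
    omega
  | succ m ih =>
    intro S hS hm
    refine reach_of_larger hn hev hS fun T hT => ih T ?_ (by omega)
    exact Set.nonempty_of_ncard_ne_zero (by omega)
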